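/- Let n ≥ 1, ε ∈ (0,1], τ ∈ [0,1), and let G = (V,E) be a finite simple graph with |E| ≥ 16n/((1−τ)²ε⁴). Let P be a probability vector on [n] with ∑_i |P i − 1/n| ≥ ε that additionally satisfies |E|·(μ(P) − μ(P)²) ≥ c(G)·(γ(P) − μ(P)²), and let T = |E|·(1+τε²)/n. Then the probability that the collision count Z satisfies Z < T is at most 1/4. -/

import Mathlib

open Finset

open Classical in
/-- Probability of the event `A` under the product distribution on `Ω = V → Fin n`,
where the coordinates are independent and each has law the probability vector `P`. -/
noncomputable def pr {V : Type*} [Fintype V] [DecidableEq V] {n : ℕ}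
    (P : Fin n → ℝ) (A : (V → Fin n) → Prop) : ℝ :=
  ∑ ω : V → Fin n, if A ω then ∏ v, P (ω v) else 0

/-- Expectation of `f` under the product distribution. -/
noncomputable def ex {V : Type*} [Fintype V] [DecidableEq V] {n : ℕ}
    (P : Fin n → ℝ) (f : (V → Fin n) → ℝ) : ℝ :=
  ∑ ω : V → Fin n, (∏ v, P (ω v)) * f ω

/-- Variance of `f` under the product distribution. -/
noncomputable def var {V : Type*} [Fintype V] [DecidableEq V] {n : ℕ}
    (P : Fin n → ℝ) (f : (V → Fin n) → ℝ) : ℝ :=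
  ex P (fun ω => (f ω - ex P f) ^ 2)

/-- The collision count `Z(ω) = ∑_{{u,v} ∈ E} 1[ω u = ω v]`. -/
noncomputable def collisions {V : Type*} [Fintype V] [DecidableEq V] {n : ℕ}
    (G : SimpleGraph V) [DecidableRel G.Adj] (ω : V → Fin n) : ℝ :=
  ∑ e ∈ G.edgeFinset,
    Sym2.lift ⟨fun u v => if ω u = ω v then (1 : ℝ) else 0,
      fun u v => by by_cases h : ω u = ω v <;> simp [h, eq_comm]⟩ e

/-- The number of edges `|E|` of the comparison graph. -/
def edgeCount {V : Type*} [Fintype V] [DecidableEq V]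
    (G : SimpleGraph V) [DecidableRel G.Adj] : ℕ :=
  G.edgeFinset.card

/-- The number of ordered 2-paths `c(G) = ∑_v d(v)·(d(v) − 1)`. -/
def twoPaths {V : Type*} [Fintype V]
    (G : SimpleGraph V) [DecidableRel G.Adj] : ℕ :=
  ∑ v, G.degree v * (G.degree v - 1)

section CollisionDeviation

variable {V : Type*} {n : ℕ} {P : Fin n → ℝ}

/-- The centred indicator of a collision between `u` and `v`. -/
noncomputable def collisionDeviation (P : Fin n → ℝ) (u v : V) (ω : V → Fin n) : ℝ :=
  (if ω u = ω v then 1 else 0) - ∑ i, P i ^ 2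

lemma collisionDeviation_comm (u v : V) (ω : V → Fin n) :
    collisionDeviation P u v ω = collisionDeviation P v u ω := by
  simp only [collisionDeviation, eq_comm]

lemma collisionDeviation_update [DecidableEq V] {u v w : V} (hu : u ≠ w) (hv : v ≠ w) (ω : V → Fin n)
    (i : Fin n) :
    collisionDeviation P u v (Function.update ω w i) = collisionDeviation P u v ω := by
  simp [collisionDeviation, hu, hv]

end CollisionDeviation

section ProductExpectation

variable {V : Type*} [Fintype V] [DecidableEq V] {n : ℕ} {P : Fin n → ℝ}

/-- Resampling one coordinate does not change the expectation. -/
lemma ex_resample (hP1 : ∑ i, P i = 1) (u : V) (f : (V → Fin n) → ℝ) :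
    ex P f = ex P (fun ω => ∑ i, P i * f (Function.update ω u i)) := by
  have weight : ∀ (ω : V → Fin n) (i : Fin n),
      (∏ v, P (Function.update ω u i v)) * P (ω u) = (∏ v, P (ω v)) * P i := by
    intro ω i
    rw [← mul_prod_erase univ (fun v => P (Function.update ω u i v)) (mem_univ u),
      ← mul_prod_erase univ (fun v => P (ω v)) (mem_univ u),
      prod_congr rfl (g := fun v => P (ω v))
        (fun v hv => by rw [Function.update_of_ne (ne_of_mem_erase hv)])]
    simp only [Function.update_self]
    ring
  have swap : Function.Involutive
      (fun p : (V → Fin n) × Fin n => (Function.update p.1 u p.2, p.1 u)) := by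
    rintro ⟨ω, i⟩
    simp
  calc ex P f
      = ∑ p : (V → Fin n) × Fin n, (∏ v, P (p.1 v)) * P p.2 * f p.1 := by
        rw [Fintype.sum_prod_type, ex]
        refine sum_congr rfl fun ω _ => ?_
        simp only
        rw [← sum_mul, ← mul_sum, hP1, mul_one]
    _ = ∑ p : (V → Fin n) × Fin n,
          (∏ v, P (p.1 v)) * P p.2 * f (Function.update p.1 u p.2) := by
        rw [← Equiv.sum_comp swap.toPerm]
        refine sum_congr rfl fun p _ => ?_
        simp only [Function.Involutive.coe_toPerm]
        rw [weight]
    _ = ex P (fun ω => ∑ i, P i * f (Function.update ω u i)) := by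
        rw [Fintype.sum_prod_type, ex]
        refine sum_congr rfl fun ω _ => ?_
        rw [mul_sum]
        exact sum_congr rfl fun i _ => by ring

lemma ex_const (hP1 : ∑ i, P i = 1) (c : ℝ) : ex P (fun _ : V → Fin n => c) = c := by
  rw [ex, ← sum_mul, ← Fintype.piFinset_univ, ← prod_univ_sum]
  simp [hP1]

lemma ex_sum {ι : Type*} (s : Finset ι) (f : ι → (V → Fin n) → ℝ) :
    ex P (fun ω => ∑ i ∈ s, f i ω) = ∑ i ∈ s, ex P (f i) := by
  simp only [ex, mul_sum]
  exact sum_comm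

lemma ex_const_mul (c : ℝ) (f : (V → Fin n) → ℝ) :
    ex P (fun ω => c * f ω) = c * ex P f := by
  simp only [ex, mul_sum]
  exact sum_congr rfl fun ω _ => by ring

lemma ex_apply (hP1 : ∑ i, P i = 1) (u : V) (g : Fin n → ℝ) :
    ex P (fun ω : V → Fin n => g (ω u)) = ∑ i, P i * g i := by
  rw [ex_resample hP1 u]
  simp only [Function.update_self]
  exact ex_const hP1 _

/-- Chebyshev's inequality for the lower tail, around an arbitrary centre `m`. -/
lemma pr_lt_mul_sq_le (hP0 : ∀ i, 0 ≤ P i) (f : (V → Fin n) → ℝ) {m T : ℝ} (hT : T ≤ m) :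
    pr P (fun ω : V → Fin n => f ω < T) * (m - T) ^ 2 ≤ ex P (fun ω => (f ω - m) ^ 2) := by
  rw [pr, ex, sum_mul]
  refine sum_le_sum fun ω _ => ?_
  have hw : 0 ≤ ∏ v, P (ω v) := prod_nonneg fun v _ => hP0 _
  split_ifs with h
  · exact mul_le_mul_of_nonneg_left (by nlinarith) hw
  · rw [zero_mul]
    positivity

/-- Averaging out an endpoint that `g` does not see. -/
lemma ex_collisionDeviation_mul (hP1 : ∑ i, P i = 1) {u v : V} (huv : u ≠ v)
    {g : (V → Fin n) → ℝ} (hg : ∀ ω i, g (Function.update ω v i) = g ω) :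
    ex P (fun ω => collisionDeviation P u v ω * g ω) =
      ex P (fun ω => (P (ω u) - ∑ i, P i ^ 2) * g ω) := by
  rw [ex_resample hP1 v]
  congr 1
  funext ω
  simp only [collisionDeviation, hg, Function.update_self, Function.update_of_ne huv, ← mul_assoc,
    ← sum_mul, mul_sub, sum_sub_distrib, hP1, one_mul]
  simp

lemma sum_mul_sub_sq (hP1 : ∑ i, P i = 1) :
    ∑ i, P i * (P i - ∑ j, P j ^ 2) ^ 2 = ∑ i, P i ^ 3 - (∑ i, P i ^ 2) ^ 2 := by
  set μ := ∑ i, P i ^ 2 with hμ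
  calc ∑ i, P i * (P i - μ) ^ 2
      = ∑ i, (P i ^ 3 - 2 * μ * P i ^ 2 + μ ^ 2 * P i) :=
        sum_congr rfl fun i _ => by ring
    _ = _ := by
        rw [sum_add_distrib, sum_sub_distrib, ← mul_sum, ← mul_sum, ← hμ, hP1]
        ring

lemma ex_collisionDeviation_sq (hP1 : ∑ i, P i = 1) {u v : V} (huv : u ≠ v) :
    ex P (fun ω => collisionDeviation P u v ω * collisionDeviation P u v ω) =
      ∑ i, P i ^ 2 - (∑ i, P i ^ 2) ^ 2 := by
  set μ := ∑ i, P i ^ 2 with hμ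
  rw [ex_resample hP1 v]
  have inner : ∀ ω : V → Fin n, ∑ i, P i *
      (collisionDeviation P u v (Function.update ω v i) *
        collisionDeviation P u v (Function.update ω v i)) =
      P (ω u) * (1 - 2 * μ) + μ ^ 2 := by
    intro ω
    simp only [collisionDeviation, Function.update_self, Function.update_of_ne huv, ← hμ]
    calc _ = ∑ i, ((if ω u = i then P i * (1 - 2 * μ) else 0) + P i * μ ^ 2) :=
          sum_congr rfl fun i _ => by split_ifs <;> ring
      _ = _ := by
          rw [sum_add_distrib, ← sum_mul, hP1]
          simp
  simp only [inner]
  rw [ex_apply hP1 u (fun x => P x * (1 - 2 * μ) + μ ^ 2)]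
  calc _ = ∑ i, (P i ^ 2 * (1 - 2 * μ) + P i * μ ^ 2) := sum_congr rfl fun i _ => by ring
    _ = _ := by
        rw [sum_add_distrib, ← sum_mul, ← sum_mul, ← hμ, hP1]
        ring

lemma ex_collisionDeviation_path (hP1 : ∑ i, P i = 1) {u v w : V} (huv : u ≠ v) (huw : u ≠ w)
    (hvw : v ≠ w) :
    ex P (fun ω => collisionDeviation P u v ω * collisionDeviation P u w ω) =
      ∑ i, P i ^ 3 - (∑ i, P i ^ 2) ^ 2 := by
  rw [ex_collisionDeviation_mul hP1 huv (collisionDeviation_update huv hvw.symm)]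
  simp only [mul_comm _ (collisionDeviation P u w _)]
  rw [ex_collisionDeviation_mul hP1 huw (by simp [huw]),
    ex_apply hP1 u (fun x => (P x - ∑ i, P i ^ 2) * (P x - ∑ i, P i ^ 2)), ← sum_mul_sub_sq hP1]
  exact sum_congr rfl fun i _ => by ring

lemma ex_collisionDeviation_disjoint (hP1 : ∑ i, P i = 1) {u v u' v' : V} (huv : u ≠ v)
    (huu' : u ≠ u') (huv' : u ≠ v') (hvu' : v ≠ u') (hvv' : v ≠ v') :
    ex P (fun ω => collisionDeviation P u v ω * collisionDeviation P u' v' ω) = 0 := by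
  rw [ex_collisionDeviation_mul hP1 huv (collisionDeviation_update hvu'.symm hvv'.symm),
    ex_resample hP1 u]
  simp only [Function.update_self, collisionDeviation_update huu'.symm huv'.symm, ← mul_assoc,
    ← sum_mul, mul_sub, sum_sub_distrib, hP1, one_mul]
  simp [← pow_two, ex_const hP1]

/-- The covariance of the collision indicators of two pairs of vertices. -/
lemma ex_collisionDeviation_mul_collisionDeviation (hP1 : ∑ i, P i = 1) {u v u' v' : V}
    (huv : u ≠ v) (huv' : u' ≠ v') :
    ex P (fun ω => collisionDeviation P u v ω * collisionDeviation P u' v' ω) =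
      (∑ i, P i ^ 3 - (∑ i, P i ^ 2) ^ 2) *
        ((if u = u' then 1 else 0) + (if u = v' then 1 else 0) +
          (if v = u' then 1 else 0) + (if v = v' then 1 else 0)) +
      ((∑ i, P i ^ 2 - (∑ i, P i ^ 2) ^ 2) - 2 * (∑ i, P i ^ 3 - (∑ i, P i ^ 2) ^ 2)) *
        ((if u = u' then if v = v' then 1 else 0 else 0) +
          (if u = v' then if v = u' then 1 else 0 else 0)) := by
  by_cases h₁ : u = u'
  · subst h₁
    by_cases h₂ : v = v'
    · subst h₂
      rw [ex_collisionDeviation_sq hP1 huv]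
      simp only [huv, huv.symm, if_true, if_false]
      ring
    · rw [ex_collisionDeviation_path hP1 huv huv' h₂]
      simp [huv', huv.symm, h₂]
  by_cases h₂ : u = v'
  · subst h₂
    simp only [collisionDeviation_comm u' u]
    by_cases h₃ : v = u'
    · subst h₃
      rw [ex_collisionDeviation_sq hP1 huv]
      simp only [huv, huv.symm, if_true, if_false]
      ring
    · rw [ex_collisionDeviation_path hP1 huv huv'.symm h₃]
      simp [huv'.symm, huv.symm, h₃]
  by_cases h₃ : v = u'
  · subst h₃
    simp only [collisionDeviation_comm u v]
    rw [ex_collisionDeviation_path hP1 huv.symm huv' h₂]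
    simp [huv, huv', h₂]
  by_cases h₄ : v = v'
  · subst h₄
    simp only [collisionDeviation_comm u v, collisionDeviation_comm u' v]
    rw [ex_collisionDeviation_path hP1 huv.symm huv'.symm h₁]
    simp [h₁, h₂, h₃]
  rw [ex_collisionDeviation_disjoint hP1 huv h₁ h₂ h₃ h₄]
  simp [h₁, h₂, h₃, h₄]

end ProductExpectation

section Graph

variable {V : Type*} [Fintype V] (G : SimpleGraph V) [DecidableRel G.Adj]

lemma sum_adj (F : V → V → ℝ) :
    ∑ p : V × V with G.Adj p.1 p.2, F p.1 p.2 = ∑ u, ∑ v, if G.Adj u v then F u v else 0 := by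
  rw [sum_filter, Fintype.sum_prod_type]

lemma sum_ite_adj_one (v : V) : ∑ w, (if G.Adj v w then (1 : ℝ) else 0) = G.degree v := by
  simp [← SimpleGraph.card_neighborFinset_eq_degree, SimpleGraph.neighborFinset_eq_filter]

lemma sum_ite_adj_one' (v : V) : ∑ w, (if G.Adj w v then (1 : ℝ) else 0) = G.degree v := by
  simp only [G.adj_comm _ v, sum_ite_adj_one]

variable [DecidableEq V]

lemma sum_adj_eq_two_mul_sum_edgeFinset (F : Sym2 V → ℝ) :
    ∑ p : V × V with G.Adj p.1 p.2, F s(p.1, p.2) = 2 * ∑ e ∈ G.edgeFinset, F e := by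
  rw [← sum_fiberwise_of_maps_to (t := G.edgeFinset) (g := fun p : V × V => s(p.1, p.2))
    (by simp), mul_sum]
  refine sum_congr rfl fun e he => ?_
  induction e using Sym2.ind with
  | _ a b =>
    have hab : G.Adj a b := by simpa using he
    have fiber : ({p ∈ ({p : V × V | G.Adj p.1 p.2} : Finset (V × V)) | s(p.1, p.2) = s(a, b)})
        = {(a, b), (b, a)} := by
      ext ⟨c, d⟩
      simp only [mem_filter, mem_univ, true_and, mem_insert, mem_singleton, Prod.mk.injEq,
        Sym2.eq_iff]
      constructor
      · exact And.right
      · rintro (⟨rfl, rfl⟩ | ⟨rfl, rfl⟩)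
        · exact ⟨hab, by simp⟩
        · exact ⟨hab.symm, by simp⟩
    rw [fiber, sum_pair (by simp [hab.ne]), Sym2.eq_swap (a := b)]
    ring

lemma sum_adj_one : ∑ p : V × V with G.Adj p.1 p.2, (1 : ℝ) = 2 * edgeCount G := by
  simpa [edgeCount] using sum_adj_eq_two_mul_sum_edgeFinset G fun _ => 1

lemma twoPaths_cast :
    (twoPaths G : ℝ) = ∑ v, (G.degree v : ℝ) ^ 2 - 2 * edgeCount G := by
  rw [← sum_adj_one, sum_adj G fun _ _ => 1]
  simp only [sum_ite_adj_one]
  rw [twoPaths, ← sum_sub_distrib]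
  push_cast
  refine sum_congr rfl fun v _ => ?_
  rcases Nat.eq_zero_or_pos (G.degree v) with h | h
  · simp [h]
  · rw [Nat.cast_sub h]
    push_cast
    ring

end Graph

section CollisionCount

variable {V : Type*} [Fintype V] [DecidableEq V] {n : ℕ} {P : Fin n → ℝ}
  (G : SimpleGraph V) [DecidableRel G.Adj]

lemma two_mul_collisions_sub (ω : V → Fin n) :
    2 * (collisions G ω - edgeCount G * ∑ i, P i ^ 2) =
      ∑ p : V × V with G.Adj p.1 p.2, collisionDeviation P p.1 p.2 ω := by
  simp only [collisionDeviation]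
  rw [sum_sub_distrib, mul_sub, collisions, ← sum_adj_eq_two_mul_sum_edgeFinset, ← mul_assoc,
    ← sum_adj_one, sum_mul]
  simp

/-- The variance of the collision count. -/
lemma ex_collisions_sub_sq (hP1 : ∑ i, P i = 1) :
    ex P (fun ω : V → Fin n => (collisions G ω - edgeCount G * ∑ i, P i ^ 2) ^ 2) =
      edgeCount G * (∑ i, P i ^ 2 - (∑ i, P i ^ 2) ^ 2) +
        twoPaths G * (∑ i, P i ^ 3 - (∑ i, P i ^ 2) ^ 2) := by
  have expand : ∀ ω : V → Fin n, (collisions G ω - edgeCount G * ∑ i, P i ^ 2) ^ 2 =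
      1 / 4 * ∑ p : V × V with G.Adj p.1 p.2, ∑ q : V × V with G.Adj q.1 q.2,
        collisionDeviation P p.1 p.2 ω * collisionDeviation P q.1 q.2 ω := by
    intro ω
    rw [← sum_mul_sum, ← two_mul_collisions_sub]
    ring
  simp only [expand]
  rw [ex_const_mul, ex_sum]
  simp only [ex_sum]
  rw [sum_congr rfl fun p hp => sum_congr rfl fun q hq =>
    ex_collisionDeviation_mul_collisionDeviation hP1 (mem_filter.1 hp).2.ne (mem_filter.1 hq).2.ne]
  have inner : ∀ p : V × V, G.Adj p.1 p.2 → ∀ a b : ℝ,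
      ∑ q : V × V with G.Adj q.1 q.2,
        (a * ((if p.1 = q.1 then 1 else 0) + (if p.1 = q.2 then 1 else 0) +
          (if p.2 = q.1 then 1 else 0) + (if p.2 = q.2 then 1 else 0)) +
        b * ((if p.1 = q.1 then if p.2 = q.2 then 1 else 0 else 0) +
          (if p.1 = q.2 then if p.2 = q.1 then 1 else 0 else 0))) =
      2 * a * (G.degree p.1 + G.degree p.2) + 2 * b := by
    rintro ⟨u, v⟩ huv a b
    have first : ∀ w, ∑ q : V × V with G.Adj q.1 q.2, (if w = q.1 then (1 : ℝ) else 0) =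
        G.degree w := by
      intro w
      rw [sum_adj G fun x _ => if w = x then 1 else 0, ← sum_ite_adj_one, sum_comm]
      refine sum_congr rfl fun x _ => ?_
      simp only [← ite_and, and_comm (b := w = _)]
      simp only [ite_and]
      simp
    have second : ∀ w, ∑ q : V × V with G.Adj q.1 q.2, (if w = q.2 then (1 : ℝ) else 0) =
        G.degree w := by
      intro w
      rw [sum_adj G fun _ y => if w = y then 1 else 0, ← sum_ite_adj_one']
      refine sum_congr rfl fun x _ => ?_
      simp only [← ite_and, and_comm (b := w = _)]
      simp only [ite_and]
      simp
    have same : ∑ q : V × V with G.Adj q.1 q.2,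
        (if u = q.1 then if v = q.2 then (1 : ℝ) else 0 else 0) = 1 := by
      rw [sum_eq_single_of_mem (u, v) (by simpa using huv)]
      · simp
      · rintro ⟨x, y⟩ _ h
        grind
    have flip : ∑ q : V × V with G.Adj q.1 q.2,
        (if u = q.2 then if v = q.1 then (1 : ℝ) else 0 else 0) = 1 := by
      rw [sum_eq_single_of_mem (v, u) (by simpa using huv.symm)]
      · simp
      · rintro ⟨x, y⟩ _ h
        grind
    simp only [sum_add_distrib, ← mul_sum, first, second, same, flip]
    ring
  rw [sum_congr rfl fun p hp => inner p (mem_filter.1 hp).2 _ _]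
  have degrees : ∑ p : V × V with G.Adj p.1 p.2, ((G.degree p.1 : ℝ) + G.degree p.2) =
      2 * ∑ v, (G.degree v : ℝ) ^ 2 := by
    rw [sum_add_distrib, sum_adj G fun u _ => (G.degree u : ℝ),
      sum_adj G fun _ v => (G.degree v : ℝ), sum_comm (f := fun u v =>
        if G.Adj u v then (G.degree v : ℝ) else 0), two_mul]
    congr 1 <;> refine sum_congr rfl fun v _ => ?_
    · rw [pow_two, ← sum_ite_adj_one G v, mul_sum]
      simp
    · rw [pow_two, ← sum_ite_adj_one' G v, mul_sum]
      simp
  rw [sum_add_distrib, ← mul_sum, degrees, ← mul_one (2 * (_ - 2 * _)), ← mul_sum, sum_adj_one,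
    twoPaths_cast]
  ring

end CollisionCount

/-- A distribution that is `ε`-far from uniform has collision probability at least
`(1 + ε²) / n`. -/
lemma one_add_sq_le_mul_sum_sq {n : ℕ} (hn : 1 ≤ n) {P : Fin n → ℝ} (hP1 : ∑ i, P i = 1)
    {ε : ℝ} (hε : 0 ≤ ε) (hfar : ε ≤ ∑ i, |P i - 1 / (n : ℝ)|) :
    1 + ε ^ 2 ≤ n * ∑ i, P i ^ 2 := by
  have hn0 : (n : ℝ) ≠ 0 := by positivity
  have cauchy : (∑ i, |P i - 1 / (n : ℝ)|) ^ 2 ≤ n * ∑ i, (P i - 1 / (n : ℝ)) ^ 2 := by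
    simpa using sq_sum_le_card_mul_sum_sq (s := (univ : Finset (Fin n)))
      (f := fun i => |P i - 1 / (n : ℝ)|)
  have expand : ∑ i, (P i - 1 / (n : ℝ)) ^ 2 = ∑ i, P i ^ 2 - 1 / n := by
    calc _ = ∑ i, (P i ^ 2 - 2 / n * P i + (1 / (n : ℝ)) ^ 2) :=
          sum_congr rfl fun i _ => by ring
      _ = _ := by
          rw [sum_add_distrib, sum_sub_distrib, ← mul_sum, hP1]
          simp only [sum_const, card_univ, Fintype.card_fin, nsmul_eq_mul]
          field_simp
          ring
  rw [expand, mul_sub, mul_one_div_cancel hn0] at cauchy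
  nlinarith

/-- Type-1 far distributions: if `|E| ≥ 16n/((1−τ)²ε⁴)`, `P` is ε-far from uniform and
`|E|·(μ − μ²) ≥ c(G)·(γ − μ²)`, then `Pr[Z < T] ≤ 1/4` for `T = |E|·(1+τε²)/n`. -/
theorem far_type_one_case {V : Type*} [Fintype V] [DecidableEq V] (n : ℕ) (hn : 1 ≤ n)
    (ε τ : ℝ) (hε0 : 0 < ε) (hε1 : ε ≤ 1) (hτ0 : 0 ≤ τ) (hτ1 : τ < 1)
    (G : SimpleGraph V) [DecidableRel G.Adj]
    (hE : 16 * (n : ℝ) / ((1 - τ) ^ 2 * ε ^ 4) ≤ (edgeCount G : ℝ))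
    (P : Fin n → ℝ) (hP0 : ∀ i, 0 ≤ P i) (hP1 : (∑ i, P i) = 1)
    (hfar : ε ≤ ∑ i, |P i - 1 / (n : ℝ)|)
    (htype : (twoPaths G : ℝ) * ((∑ i, (P i) ^ 3) - (∑ i, (P i) ^ 2) ^ 2)
        ≤ (edgeCount G : ℝ) * ((∑ i, (P i) ^ 2) - (∑ i, (P i) ^ 2) ^ 2))
    (T : ℝ) (hT : T = (edgeCount G : ℝ) * (1 + τ * ε ^ 2) / n) :
    pr P (fun ω : V → Fin n => collisions G ω < T) ≤ 1 / 4 := by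
  have hn0 : (0 : ℝ) < n := by exact_mod_cast hn
  have hτ : 0 < 1 - τ := by linarith
  have hfar' := one_add_sq_le_mul_sum_sq hn hP1 hε0.le hfar
  have hvar := ex_collisions_sub_sq G hP1
  set μ := ∑ i, P i ^ 2
  set m : ℝ := (edgeCount G : ℝ)
  obtain ⟨δ, hδ⟩ : ∃ δ, δ = n * μ - 1 := ⟨_, rfl⟩
  have hμ : μ = (1 + δ) / n := by
    rw [hδ]
    field_simp
    ring
  have hδε : ε ^ 2 ≤ δ := by linarith
  have hε2 : 0 < ε ^ 2 := by positivity
  have hδ0 : 0 < δ := hε2.trans_le hδε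
  have hm : 16 * n ≤ m * ((1 - τ) ^ 2 * ε ^ 4) := (div_le_iff₀ (by positivity)).1 hE
  have hm0 : 0 < m := lt_of_lt_of_le (by positivity) hE
  have hgap : m * ((1 - τ) * δ) / n ≤ m * μ - T := by
    have : m * μ - T = m * (δ - τ * ε ^ 2) / n := by
      rw [hμ, hT]
      ring
    rw [this]
    have : (1 - τ) * δ ≤ δ - τ * ε ^ 2 := by nlinarith
    gcongr
  have hgap0 : 0 < m * ((1 - τ) * δ) / n := by positivity
  have hcheb := pr_lt_mul_sq_le hP0 (fun ω : V → Fin n => collisions G ω)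
    (m := m * μ) (T := T) (by linarith)
  have hδsq : (1 + δ) * ε ^ 4 ≤ 2 * δ ^ 2 := by
    have h₁ : ε ^ 4 ≤ δ ^ 2 := by nlinarith
    have h₂ : ε ^ 4 ≤ δ := (pow_le_pow_of_le_one hε0.le hε1 (by norm_num)).trans hδε
    nlinarith
  have hbound : 2 * (m * μ) ≤ 1 / 4 * (m * ((1 - τ) * δ) / n) ^ 2 := by
    rw [hμ, div_pow, ← mul_div_assoc, ← mul_div_assoc, ← mul_div_assoc,
      div_le_div_iff₀ hn0 (by positivity)]
    have h₁ : 16 * n * (1 + δ) ≤ m * (1 - τ) ^ 2 * (2 * δ ^ 2) := by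
      calc 16 * n * (1 + δ) ≤ m * ((1 - τ) ^ 2 * ε ^ 4) * (1 + δ) := by gcongr
        _ = m * (1 - τ) ^ 2 * ((1 + δ) * ε ^ 4) := by ring
        _ ≤ _ := by gcongr
    have h₂ := mul_le_mul_of_nonneg_left h₁ (by positivity : 0 ≤ m * n / 8)
    linarith
  have hvar' : ex P (fun ω : V → Fin n => (collisions G ω - m * μ) ^ 2) ≤ 2 * (m * μ) := by
    rw [hvar]
    nlinarith [sq_nonneg μ]
  have hsq : (m * ((1 - τ) * δ) / n) ^ 2 ≤ (m * μ - T) ^ 2 := by gcongr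
  refine le_of_mul_le_mul_right (a := (m * μ - T) ^ 2) ?_ (by nlinarith)
  linarith
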